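/- Let q be a complex-valued quadratic form on ℝ^{2n} with Re q(X) ≤ 0 for all X ∈ ℝ^{2n}, with Hamilton map F and singular space S, and assume q is elliptic on S (X ∈ S and q(X) = 0 imply X = 0). Let λ_1, …, λ_r be the distinct positive real eigenvalues of F (so that σ(F) ∩ ℝ = {±λ_1, …, ±λ_r}). Then the singular space decomposes as the direct sum S = S_{λ_1} ⊕ S_{λ_2} ⊕ … ⊕ S_{λ_r}, where S_{λ_j} = (Ker(F − λ_j) ⊕ Ker(F + λ_j)) ∩ ℝ^{2n}, and the summands are pairwise symplectically orthogonal: σ(X,Y) = 0 whenever X ∈ S_{λ_j}, Y ∈ S_{λ_k}, j ≠ k. -/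

import Mathlib

open Matrix

/-- The canonical symplectic form `σ((x,ξ),(y,η)) = ξ·y − x·η` on `R^{n+n}`,
where the first `n` coordinates are `x` and the last `n` coordinates are `ξ`.
Over `R = ℂ` this is the ℂ-bilinear extension of the real canonical symplectic form. -/
def symp {R : Type*} [CommRing R] {n : ℕ} (X Y : Fin (n + n) → R) : R :=
  ∑ i : Fin n, (X (Fin.natAdd n i) * Y (Fin.castAdd n i)
    - X (Fin.castAdd n i) * Y (Fin.natAdd n i))

/-- The canonical inclusion `ℝ^{2n} ⊆ ℂ^{2n}`. -/
def cx {n : ℕ} (X : Fin (n + n) → ℝ) : Fin (n + n) → ℂ := fun i => (X i : ℂ)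

/-- The real part of a complex matrix. -/
def ReM {n : ℕ} (F : Matrix (Fin (n + n)) (Fin (n + n)) ℂ) :
    Matrix (Fin (n + n)) (Fin (n + n)) ℝ := F.map Complex.re

/-- The imaginary part of a complex matrix. -/
def ImM {n : ℕ} (F : Matrix (Fin (n + n)) (Fin (n + n)) ℂ) :
    Matrix (Fin (n + n)) (Fin (n + n)) ℝ := F.map Complex.im

/-- The singular space `S = (⋂_{j=0}^{2n−1} Ker[Re F ∘ (Im F)^j]) ∩ ℝ^{2n}`
associated to a quadratic form with Hamilton map `F`. -/
def singularSpace {n : ℕ} (F : Matrix (Fin (n + n)) (Fin (n + n)) ℂ) :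
    Set (Fin (n + n) → ℝ) :=
  {X | ∀ j < n + n, (ReM F * ImM F ^ j).mulVec X = 0}

/-- The space `S_λ = (Ker(F − λ) ⊕ Ker(F + λ)) ∩ ℝ^{2n}`: real vectors which are the sum
of an eigenvector (or zero) of `F` for the eigenvalue `λ` and one for `−λ`. -/
def Slam {n : ℕ} (F : Matrix (Fin (n + n)) (Fin (n + n)) ℂ) (l : ℝ) :
    Set (Fin (n + n) → ℝ) :=
  {X | ∃ u v : Fin (n + n) → ℂ, F.mulVec u = (l : ℂ) • u ∧
    F.mulVec v = (-(l : ℂ)) • v ∧ cx X = u + v}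

/-! Write `A = Re F` and `B = Im F`; both are skew for `σ`, and `Re q(X) = σ(X, AX)`,
`Im q(X) = σ(X, BX)`. If `F(a + ib) = λ(a + ib)` with `λ` real, then skewness gives
`σ(a, Aa) + σ(b, Ab) = 0`, so `Aa = Ab = 0` by semi-definiteness, whence `Ba = λb` and `Bb = -λa`.
Thus `S_λ = S ∩ Ker(B² + λ²)`. On the `B`-invariant space `S` the symmetric form `σ(X, BY)` is
anisotropic, hence definite, and `-B²` is self-adjoint and positive for it. The claim is therefore
the spectral theorem for `-B²` on `S`. -/

open LinearMap (BilinForm ker)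
open Module Submodule

section SkewAdjoint

variable {R M : Type*} [CommRing R] [AddCommGroup M] [Module R M]
  {ω : BilinForm R M} {C T : End R M}

lemma isSkewAdjoint_apply (hC : ω.IsSkewAdjoint C) (x y : M) : ω (C x) y = -ω x (C y) := by
  simpa using hC x y

lemma isSymm_compRight_of_isSkewAdjoint (hω : ω.IsAlt) (hC : ω.IsSkewAdjoint C) :
    (ω.compRight C).IsSymm where
  eq x y := by
    simp only [BilinForm.compRight_apply]
    rw [← hω.neg_eq, isSkewAdjoint_apply hC, neg_neg]

lemma isSkewAdjoint_compRight (hC : ω.IsSkewAdjoint C) : (ω.compRight C).IsSkewAdjoint C :=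
  fun x y => by simp [isSkewAdjoint_apply hC]

lemma isSelfAdjoint_sq_of_isSkewAdjoint (hC : ω.IsSkewAdjoint C) :
    ω.IsSelfAdjoint (C ^ 2 : End R M) :=
  fun x y => by simp [pow_two, isSkewAdjoint_apply hC]

lemma apply_eq_zero_of_mem_eigenspace [IsDomain R] (hT : ω.IsSelfAdjoint T) {μ ν : R}
    (hμν : μ ≠ ν) {x y : M} (hx : x ∈ T.eigenspace μ) (hy : y ∈ T.eigenspace ν) : ω x y = 0 := by
  have h : μ * ω x y = ν * ω x y := by
    simpa [End.mem_eigenspace_iff.1 hx, End.mem_eigenspace_iff.1 hy] using hT x y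
  exact (mul_eq_mul_right_iff.1 h).resolve_left hμν

end SkewAdjoint

section Definite

variable {V : Type*} [AddCommGroup V] [Module ℝ V] {Q ω : BilinForm ℝ V} {C T : End ℝ V}

lemma pos_or_neg_of_anisotropic (hQ : Q.IsSymm) (haniso : ∀ x, Q x x = 0 → x = 0) :
    (∀ x, x ≠ 0 → 0 < Q x x) ∨ (∀ x, x ≠ 0 → Q x x < 0) := by
  by_contra! h
  obtain ⟨⟨x, hx0, hx⟩, ⟨y, hy0, hy⟩⟩ := h
  have hx : Q x x < 0 := hx.lt_of_ne (mt (haniso x) hx0)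
  have hy : 0 < Q y y := hy.lt_of_ne' (mt (haniso y) hy0)
  have hdiscrim : 0 ≤ discrim (Q y y) (2 * Q x y) (Q x x) := by
    unfold discrim
    nlinarith [sq_nonneg (2 * Q x y), mul_pos hy (neg_pos.2 hx)]
  obtain ⟨t, ht⟩ := exists_quadratic_eq_zero hy.ne' ⟨_, (Real.mul_self_sqrt hdiscrim).symm⟩
  have hsymm : Q y x = Q x y := hQ.eq y x
  have hisotropic : Q (x + t • y) (x + t • y) = 0 := by
    simp only [map_add, map_smul, LinearMap.add_apply, LinearMap.smul_apply, smul_eq_mul, hsymm]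
    linarith
  have hxy : x = -(t • y) := eq_neg_of_add_eq_zero_left (haniso _ hisotropic)
  have hxx : Q x x = t * t * Q y y := by simp [hxy, mul_assoc]
  exact hx.not_ge (hxx ▸ mul_nonneg (mul_self_nonneg t) hy.le)

variable [FiniteDimensional ℝ V]

lemma iSup_eigenspace_eq_top_of_isSelfAdjoint (hQ : Q.IsSymm) (hpos : ∀ x, x ≠ 0 → 0 < Q x x)
    (hT : Q.IsSelfAdjoint T) : ⨆ μ, T.eigenspace μ = ⊤ := by
  let core : InnerProductSpace.Core ℝ V :=
    { inner x y := Q x y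
      conj_inner_symm x y := hQ.eq y x
      re_inner_nonneg x := by
        obtain rfl | hx := eq_or_ne x 0
        · simp
        · exact (hpos x hx).le
      add_left x y z := by simp
      smul_left x y r := by simp
      definite x hx := by_contra fun hx0 => (hpos x hx0).ne' hx }
  let _ : NormedAddCommGroup V := core.toNormedAddCommGroup
  let _ : InnerProductSpace ℝ V := InnerProductSpace.ofCore core.toCore
  have hsymm : T.IsSymmetric := hT
  exact orthogonal_eq_bot_iff.1 hsymm.orthogonalComplement_iSup_eigenspaces_eq_bot

lemma iSup_eigenspace_sq_eq_top_of_pos (hω : ω.IsAlt) (hC : ω.IsSkewAdjoint C)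
    (hpos : ∀ x, x ≠ 0 → 0 < ω x (C x)) :
    ⨆ (l : ℝ) (_ : 0 < l), (C ^ 2).eigenspace (-l ^ 2) = ⊤ := by
  rw [eq_top_iff, ← iSup_eigenspace_eq_top_of_isSelfAdjoint
    (isSymm_compRight_of_isSkewAdjoint hω hC) hpos
    (isSelfAdjoint_sq_of_isSkewAdjoint (isSkewAdjoint_compRight hC))]
  refine iSup_le fun μ x hx => ?_
  obtain rfl | hx0 := eq_or_ne x 0
  · exact zero_mem _
  have hCCx : C (C x) = μ • x := by simpa [pow_two] using End.mem_eigenspace_iff.1 hx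
  have hCx : C x ≠ 0 := fun h => (hpos x hx0).ne' (by simp [h])
  have hμ : 0 < -μ := by
    have h : ω (C x) (C (C x)) = -μ * ω x (C x) := by
      rw [isSkewAdjoint_apply hC, hCCx]
      simp
    exact pos_of_mul_pos_left (h ▸ hpos _ hCx) (hpos x hx0).le
  refine mem_iSup_of_mem √(-μ) (mem_iSup_of_mem (Real.sqrt_pos.2 hμ) ?_)
  rwa [Real.sq_sqrt hμ.le, neg_neg]

theorem iSup_eigenspace_sq_eq_top_of_anisotropic (hω : ω.IsAlt) (hC : ω.IsSkewAdjoint C)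
    (haniso : ∀ x, ω x (C x) = 0 → x = 0) :
    ⨆ (l : ℝ) (_ : 0 < l), (C ^ 2).eigenspace (-l ^ 2) = ⊤ := by
  rcases pos_or_neg_of_anisotropic (isSymm_compRight_of_isSkewAdjoint hω hC) haniso with h | h
  · exact iSup_eigenspace_sq_eq_top_of_pos hω hC h
  · exact iSup_eigenspace_sq_eq_top_of_pos hω.neg
      (fun x y => by simp [isSkewAdjoint_apply hC]) fun x hx => by simpa using h x hx

end Definite

section SingularSubmodule

open Polynomial

variable {R M : Type*} [CommRing R] [AddCommGroup M] [Module R M] {A B : End R M} {x : M}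

/-- The largest `B`-invariant submodule contained in the kernel of `A`. For `A = Re F` and
`B = Im F` this is the singular space; all powers of `B` are used, so that `B`-invariance is
immediate. -/
def singularSubmodule (A B : End R M) : Submodule R M := ⨅ j : ℕ, ker (A * B ^ j)

lemma mem_singularSubmodule : x ∈ singularSubmodule A B ↔ ∀ j : ℕ, A ((B ^ j) x) = 0 := by
  simp [singularSubmodule]

lemma apply_eq_zero_of_mem_singularSubmodule (hx : x ∈ singularSubmodule A B) : A x = 0 :=
  mem_singularSubmodule.1 hx 0

lemma apply_mem_singularSubmodule (hx : x ∈ singularSubmodule A B) :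
    B x ∈ singularSubmodule A B :=
  mem_singularSubmodule.2 fun j => mem_singularSubmodule.1 hx (j + 1)

lemma le_singularSubmodule {p : Submodule R M} (hA : p ≤ ker A) (hB : p ≤ p.comap B) :
    p ≤ singularSubmodule A B := fun _ hx =>
  mem_singularSubmodule.2 fun j => hA (End.pow_apply_mem_of_forall_mem j hB _ hx)

lemma mem_singularSubmodule_iff_forall_lt_finrank [Nontrivial R] [Module.Free R M]
    [Module.Finite R M] :
    x ∈ singularSubmodule A B ↔ ∀ j < finrank R M, A ((B ^ j) x) = 0 := by
  refine ⟨fun hx j _ => mem_singularSubmodule.1 hx j, fun hx => mem_singularSubmodule.2 fun j => ?_⟩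
  have hdeg : (X ^ j %ₘ B.charpoly).degree < finrank R M := by
    rw [← B.charpoly_natDegree, ← degree_eq_natDegree B.charpoly_monic.ne_zero]
    exact degree_modByMonic_lt _ B.charpoly_monic
  rw [LinearMap.pow_eq_aeval_mod_charpoly, aeval_eq_sum_range, LinearMap.sum_apply, map_sum]
  refine Finset.sum_eq_zero fun i _ => ?_
  rw [LinearMap.smul_apply, map_smul]
  by_cases hi : (X ^ j %ₘ B.charpoly).coeff i = 0
  · rw [hi, zero_smul]
  · rw [hx i (WithBot.coe_lt_coe.1 ((le_degree_of_ne_zero hi).trans_lt hdeg)), smul_zero]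

/-- The part of the singular submodule on which `B² = -l²`. For `A = Re F` and `B = Im F` this is
the space `S_l`, described by real data only. -/
def singularEigenspace (A B : End R M) (l : R) : Submodule R M :=
  singularSubmodule A B ⊓ (B ^ 2).eigenspace (-l ^ 2)

lemma mem_singularEigenspace {l : R} :
    x ∈ singularEigenspace A B l ↔ x ∈ singularSubmodule A B ∧ B (B x) = -l ^ 2 • x := by
  simp [singularEigenspace, pow_two]

lemma singularEigenspace_neg (l : R) : singularEigenspace A B (-l) = singularEigenspace A B l := by
  rw [singularEigenspace, singularEigenspace, neg_sq]

end SingularSubmodule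

section RealSymplectic

variable {V : Type*} [AddCommGroup V] [Module ℝ V] {ω : BilinForm ℝ V} {A B : End ℝ V}

lemma apply_eq_zero_of_apply_self_eq_zero (hω : ω.IsAlt) (hnd : ω.Nondegenerate)
    (hA : ω.IsSkewAdjoint A) (hneg : ∀ x, ω x (A x) ≤ 0) {x : V} (hx : ω x (A x) = 0) :
    A x = 0 := by
  have hker : x ∈ ker (-ω.compRight A) :=
    (BilinForm.apply_apply_same_eq_zero_iff (-ω.compRight A) (fun y => by simpa using hneg y)
      ⟨fun y z => by simpa using (isSymm_compRight_of_isSkewAdjoint hω hA).eq y z⟩).1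
      (by simpa using hx)
  refine hnd.2 _ fun y => ?_
  rw [← BilinForm.compRight_apply, (isSymm_compRight_of_isSkewAdjoint hω hA).eq]
  simpa using DFunLike.congr_fun hker y

/-- The hypotheses say that `a + ib` satisfies `(A + iB)(a + ib) = l(a + ib)`. -/
lemma mem_singularEigenspace_of_eigenvector (hω : ω.IsAlt) (hnd : ω.Nondegenerate)
    (hA : ω.IsSkewAdjoint A) (hB : ω.IsSkewAdjoint B) (hneg : ∀ x, ω x (A x) ≤ 0)
    {l : ℝ} {a b : V} (hre : A a - B b = l • a) (him : A b + B a = l • b) :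
    a ∈ singularEigenspace A B l := by
  have hωa : ω a (A a) = ω a (B b) := by
    rw [sub_eq_iff_eq_add.1 hre, map_add, map_smul, hω.self_eq_zero, smul_zero, zero_add]
  have hωb : ω b (A b) = -ω a (B b) := by
    rw [eq_sub_of_add_eq him, map_sub, map_smul, hω.self_eq_zero, smul_zero, zero_sub,
      ← hω.neg_eq, isSkewAdjoint_apply hB, neg_neg]
  have hAa : A a = 0 := apply_eq_zero_of_apply_self_eq_zero hω hnd hA hneg
    (by linarith [hneg a, hneg b])
  have hAb : A b = 0 := apply_eq_zero_of_apply_self_eq_zero hω hnd hA hneg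
    (by linarith [hneg a, hneg b])
  have hBb : B b = -(l • a) := by rw [← hre, hAa, zero_sub, neg_neg]
  have hBa : B a = l • b := by rw [← him, hAb, zero_add]
  have hspan : span ℝ {a, b} ≤ singularSubmodule A B := by
    refine le_singularSubmodule (span_le.2 ?_) (span_le.2 ?_)
    · rintro _ (rfl | rfl) <;> assumption
    · rintro _ (rfl | rfl)
      · simpa [hBa] using smul_mem _ l (mem_span_of_mem (by simp))
      · simpa [hBb] using smul_mem _ l (mem_span_of_mem (by simp))
  refine mem_singularEigenspace.2 ⟨hspan (mem_span_of_mem (by simp)), ?_⟩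
  rw [hBa, map_smul, hBb]
  module

theorem iSup_singularEigenspace_eq_singularSubmodule [FiniteDimensional ℝ V] (hω : ω.IsAlt)
    (hB : ω.IsSkewAdjoint B) (hell : ∀ x ∈ singularSubmodule A B, ω x (B x) = 0 → x = 0) :
    ⨆ (l : ℝ) (_ : 0 < l), singularEigenspace A B l = singularSubmodule A B := by
  set S := singularSubmodule A B
  have hBS : ∀ x ∈ S, B x ∈ S := fun _ => apply_mem_singularSubmodule
  have hB2S : ∀ x ∈ S, (B ^ 2) x ∈ S := fun x hx => hBS _ (hBS x hx)
  let C : End ℝ S := B.restrict hBS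
  have hCC : C ^ 2 = (B ^ 2).restrict hB2S := End.pow_restrict 2 hBS
  have htop : ⨆ (l : ℝ) (_ : 0 < l), (C ^ 2).eigenspace (-l ^ 2) = ⊤ :=
    iSup_eigenspace_sq_eq_top_of_anisotropic (ω := ω.restrict S) (fun x => hω x)
      (fun x y => hB x y) fun x hx => Subtype.ext (hell x x.2 hx)
  calc ⨆ (l : ℝ) (_ : 0 < l), singularEigenspace A B l
      = ⨆ (l : ℝ) (_ : 0 < l), ((C ^ 2).eigenspace (-l ^ 2)).map S.subtype := by
        simp only [hCC, singularEigenspace, End.eigenspace,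
          ← Submodule.inf_genEigenspace _ S hB2S, S]
    _ = S := by simp only [← Submodule.map_iSup, htop, Submodule.map_top, range_subtype]

lemma iSupIndep_singularEigenspace {ι : Type*} {lam : ι → ℝ} (hinj : Function.Injective lam)
    (hpos : ∀ j, 0 < lam j) : iSupIndep fun j => singularEigenspace A B (lam j) := by
  have hsq : Function.Injective fun j => -lam j ^ 2 := fun j k hjk =>
    hinj ((pow_left_inj₀ (hpos j).le (hpos k).le two_ne_zero).1 (neg_injective hjk))
  exact ((B ^ 2).eigenspaces_iSupIndep.comp hsq).mono fun _ => inf_le_right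

lemma apply_eq_zero_of_mem_singularEigenspace (hB : ω.IsSkewAdjoint B) {l m : ℝ} (hl : 0 < l)
    (hm : 0 < m) (hlm : l ≠ m) {x y : V} (hx : x ∈ singularEigenspace A B l)
    (hy : y ∈ singularEigenspace A B m) : ω x y = 0 := by
  have hsq : -l ^ 2 ≠ -m ^ 2 := fun h =>
    hlm ((pow_left_inj₀ hl.le hm.le two_ne_zero).1 (neg_injective h))
  exact apply_eq_zero_of_mem_eigenspace (isSelfAdjoint_sq_of_isSkewAdjoint hB) hsq hx.2 hy.2

end RealSymplectic

section SympForm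

variable {R : Type*} [CommRing R] {n : ℕ}

/-- The canonical symplectic form `symp` as a bilinear form. -/
def sympForm (R : Type*) [CommRing R] (n : ℕ) : BilinForm R (Fin (n + n) → R) :=
  LinearMap.mk₂ R symp
    (fun X Y Z => by
      simp only [symp, ← Finset.sum_add_distrib, Pi.add_apply]
      exact Finset.sum_congr rfl fun i _ => by ring)
    (fun c X Y => by
      simp only [symp, smul_eq_mul, Finset.mul_sum, Pi.smul_apply]
      exact Finset.sum_congr rfl fun i _ => by ring)
    (fun X Y Z => by
      simp only [symp, ← Finset.sum_add_distrib, Pi.add_apply]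
      exact Finset.sum_congr rfl fun i _ => by ring)
    (fun c X Y => by
      simp only [symp, smul_eq_mul, Finset.mul_sum, Pi.smul_apply]
      exact Finset.sum_congr rfl fun i _ => by ring)

@[simp]
lemma sympForm_apply (X Y : Fin (n + n) → R) : sympForm R n X Y = symp X Y := rfl

lemma isAlt_sympForm : (sympForm R n).IsAlt := fun X => by
  simp [symp, mul_comm]

lemma nondegenerate_sympForm : (sympForm R n).Nondegenerate := by
  refine (LinearMap.IsRefl.nondegenerate_iff_separatingLeft
    fun X Y => isAlt_sympForm.isRefl X Y).2 fun X hX => ?_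
  ext i
  induction i using Fin.addCases with
  | left i =>
    simpa [symp, Pi.single_apply, -Fin.natAdd_eq_addNat] using
      hX (Fin.append 0 (Pi.single i 1))
  | right i =>
    simpa [symp, Pi.single_apply, -Fin.natAdd_eq_addNat] using
      hX (Fin.append (Pi.single i 1) 0)

end SympForm

section HamiltonMap

variable {n : ℕ} {F : Matrix (Fin (n + n)) (Fin (n + n)) ℂ}

lemma symp_cx (X Y : Fin (n + n) → ℝ) : symp (cx X) (cx Y) = (symp X Y : ℝ) := by
  simp [symp, cx]

lemma mulVec_cx (X : Fin (n + n) → ℝ) :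
    F *ᵥ cx X = cx (ReM F *ᵥ X) + Complex.I • cx (ImM F *ᵥ X) := by
  ext i
  apply Complex.ext <;> simp [mulVec, dotProduct, cx, ReM, ImM]

lemma re_mulVec (u : Fin (n + n) → ℂ) :
    Complex.re ∘ (F *ᵥ u) = ReM F *ᵥ (Complex.re ∘ u) - ImM F *ᵥ (Complex.im ∘ u) := by
  ext i
  simp [mulVec, dotProduct, ReM, ImM]

lemma im_mulVec (u : Fin (n + n) → ℂ) :
    Complex.im ∘ (F *ᵥ u) = ReM F *ᵥ (Complex.im ∘ u) + ImM F *ᵥ (Complex.re ∘ u) := by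
  ext i
  simp [mulVec, dotProduct, ReM, ImM, Finset.sum_add_distrib]

lemma symp_cx_mulVec_cx (X Y : Fin (n + n) → ℝ) :
    symp (cx X) (F *ᵥ cx Y) =
      (symp X (ReM F *ᵥ Y) : ℝ) + Complex.I * (symp X (ImM F *ᵥ Y) : ℝ) := by
  rw [mulVec_cx, ← sympForm_apply, map_add, map_smul]
  simp only [sympForm_apply, symp_cx, smul_eq_mul]

lemma isSkewAdjoint_ReM_and_ImM
    (hskew : ∀ X Y : Fin (n + n) → ℂ, symp (F *ᵥ X) Y = -symp X (F *ᵥ Y)) :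
    (sympForm ℝ n).IsSkewAdjoint (ReM F).toLin' ∧ (sympForm ℝ n).IsSkewAdjoint (ImM F).toLin' := by
  have hsymm (X Y : Fin (n + n) → ℝ) :
      symp (cx Y) (F *ᵥ cx X) = symp (cx X) (F *ᵥ cx Y) := by
    rw [← neg_inj, ← hskew, ← sympForm_apply, ← sympForm_apply, isAlt_sympForm.neg_eq]
  simp only [symp_cx_mulVec_cx, Complex.ext_iff] at hsymm
  constructor <;> intro X Y <;> rw [← isAlt_sympForm.neg_eq, Pi.neg_apply, map_neg, neg_inj]
  · simpa using (hsymm X Y).1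
  · simpa using (hsymm X Y).2

lemma mem_singularSpace_iff {X : Fin (n + n) → ℝ} :
    X ∈ singularSpace F ↔ X ∈ singularSubmodule (ReM F).toLin' (ImM F).toLin' := by
  rw [mem_singularSubmodule_iff_forall_lt_finrank]
  simp [singularSpace, ← toLin'_pow]

/-- The vector `X + i l⁻¹ BX`, where `B = Im F`. For `X` in the singular space with `B²X = -l²X` it
is an eigenvector of `F` for the eigenvalue `l`. -/
noncomputable def eigenvectorLift (F : Matrix (Fin (n + n)) (Fin (n + n)) ℂ) (l : ℝ)
    (X : Fin (n + n) → ℝ) : Fin (n + n) → ℂ :=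
  cx X + (Complex.I / l) • cx (ImM F *ᵥ X)

lemma re_eigenvectorLift (l : ℝ) (X : Fin (n + n) → ℝ) :
    Complex.re ∘ eigenvectorLift F l X = X := by
  ext i
  simp [eigenvectorLift, cx]

lemma eigenvectorLift_add_eigenvectorLift_neg (l : ℝ) (X : Fin (n + n) → ℝ) :
    eigenvectorLift F l X + eigenvectorLift F (-l) X = (2 : ℂ) • cx X := by
  rw [eigenvectorLift, eigenvectorLift, Complex.ofReal_neg]
  module

lemma mulVec_eigenvectorLift {X : Fin (n + n) → ℝ} {l : ℝ} (hl : l ≠ 0)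
    (hX : X ∈ singularEigenspace (ReM F).toLin' (ImM F).toLin' l) :
    F *ᵥ eigenvectorLift F l X = (l : ℂ) • eigenvectorLift F l X := by
  obtain ⟨hS, hBB⟩ := mem_singularEigenspace.1 hX
  have hA : ReM F *ᵥ X = 0 := apply_eq_zero_of_mem_singularSubmodule hS
  have hAB : ReM F *ᵥ ImM F *ᵥ X = 0 :=
    apply_eq_zero_of_mem_singularSubmodule (apply_mem_singularSubmodule hS)
  replace hBB : ImM F *ᵥ ImM F *ᵥ X = -l ^ 2 • X := hBB
  rw [eigenvectorLift, mulVec_add, mulVec_smul, mulVec_cx, mulVec_cx, hA, hAB, hBB]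
  ext i
  have hl : (l : ℂ) ≠ 0 := mod_cast hl
  simp only [neg_smul, smul_add, Pi.add_apply, cx, Pi.zero_apply, Complex.ofReal_zero,
    Pi.smul_apply, smul_eq_mul, zero_add, mul_zero, Pi.neg_apply, Complex.ofReal_neg,
    Complex.ofReal_mul, Complex.ofReal_pow, mul_neg]
  field_simp
  linear_combination -(l * X i : ℂ) * Complex.I_sq

lemma exists_eigenvector_of_mem_singularEigenspace {X : Fin (n + n) → ℝ} {l : ℝ} (hl : l ≠ 0)
    (hX : X ∈ singularEigenspace (ReM F).toLin' (ImM F).toLin' l) (hX0 : X ≠ 0) :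
    ∃ v : Fin (n + n) → ℂ, v ≠ 0 ∧ F *ᵥ v = (l : ℂ) • v := by
  refine ⟨_, fun h => hX0 ?_, mulVec_eigenvectorLift hl hX⟩
  rw [← re_eigenvectorLift (F := F) l X, h]
  rfl

lemma re_mem_singularEigenspace
    (hskew : ∀ X Y : Fin (n + n) → ℂ, symp (F *ᵥ X) Y = -symp X (F *ᵥ Y))
    (hneg : ∀ X : Fin (n + n) → ℝ, symp X (ReM F *ᵥ X) ≤ 0)
    {u : Fin (n + n) → ℂ} {l : ℝ} (hu : F *ᵥ u = (l : ℂ) • u) :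
    Complex.re ∘ u ∈ singularEigenspace (ReM F).toLin' (ImM F).toLin' l := by
  obtain ⟨hA, hB⟩ := isSkewAdjoint_ReM_and_ImM hskew
  refine mem_singularEigenspace_of_eigenvector (b := Complex.im ∘ u) isAlt_sympForm
    nondegenerate_sympForm hA hB hneg ?_ ?_
  · rw [toLin'_apply, toLin'_apply, ← re_mulVec, hu]
    ext i
    simp
  · rw [toLin'_apply, toLin'_apply, ← im_mulVec, hu]
    ext i
    simp

theorem mem_Slam_iff
    (hskew : ∀ X Y : Fin (n + n) → ℂ, symp (F *ᵥ X) Y = -symp X (F *ᵥ Y))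
    (hneg : ∀ X : Fin (n + n) → ℝ, symp X (ReM F *ᵥ X) ≤ 0)
    {X : Fin (n + n) → ℝ} {l : ℝ} (hl : l ≠ 0) :
    X ∈ Slam F l ↔ X ∈ singularEigenspace (ReM F).toLin' (ImM F).toLin' l := by
  constructor
  · rintro ⟨u, v, hu, hv, hX⟩
    have hre : X = Complex.re ∘ u + Complex.re ∘ v := by
      ext i
      simpa [cx] using congrArg Complex.re (congrFun hX i)
    have hv := re_mem_singularEigenspace hskew hneg (l := -l) (by simpa using hv)
    rw [singularEigenspace_neg] at hv
    exact hre ▸ add_mem (re_mem_singularEigenspace hskew hneg hu) hv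
  · intro hX
    have hu := mulVec_eigenvectorLift hl hX
    rw [← singularEigenspace_neg] at hX
    have hv := mulVec_eigenvectorLift (neg_ne_zero.2 hl) hX
    refine ⟨(2⁻¹ : ℂ) • eigenvectorLift F l X, (2⁻¹ : ℂ) • eigenvectorLift F (-l) X, ?_, ?_, ?_⟩
    · rw [mulVec_smul, hu, smul_comm]
    · rw [mulVec_smul, hv, smul_comm, Complex.ofReal_neg]
    · rw [← smul_add, eigenvectorLift_add_eigenvectorLift_neg, inv_smul_smul₀ two_ne_zero]

lemma iSup_singularEigenspace_eigenvalues_eq_singularSubmodule {ι : Type*} {lam : ι → ℝ}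
    (hskew : ∀ X Y : Fin (n + n) → ℂ, symp (F *ᵥ X) Y = -symp X (F *ᵥ Y))
    (hell : ∀ X ∈ singularSpace F, symp (cx X) (F *ᵥ cx X) = 0 → X = 0)
    (hpos : ∀ j, 0 < lam j)
    (hall : ∀ m : ℝ, (∃ v : Fin (n + n) → ℂ, v ≠ 0 ∧ F *ᵥ v = (m : ℂ) • v) →
      ∃ j, m = lam j ∨ m = -lam j) :
    ⨆ j, singularEigenspace (ReM F).toLin' (ImM F).toLin' (lam j) =
      singularSubmodule (ReM F).toLin' (ImM F).toLin' := by
  have hell' : ∀ X ∈ singularSubmodule (ReM F).toLin' (ImM F).toLin',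
      sympForm ℝ n X ((ImM F).toLin' X) = 0 → X = 0 := fun X hX hq => by
    have hA : ReM F *ᵥ X = 0 := apply_eq_zero_of_mem_singularSubmodule hX
    refine hell X (mem_singularSpace_iff.2 hX) ?_
    rw [toLin'_apply, sympForm_apply] at hq
    rw [symp_cx_mulVec_cx, hA, hq, ← sympForm_apply, map_zero]
    simp
  refine le_antisymm (iSup_le fun j => inf_le_left) ?_
  rw [← iSup_singularEigenspace_eq_singularSubmodule isAlt_sympForm
    (isSkewAdjoint_ReM_and_ImM hskew).2 hell']
  refine iSup₂_le fun l hl X hX => ?_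
  obtain rfl | hX0 := eq_or_ne X 0
  · exact zero_mem _
  obtain ⟨j, rfl | rfl⟩ := hall l (exists_eigenvector_of_mem_singularEigenspace hl.ne' hX hX0)
  · exact mem_iSup_of_mem j hX
  · exact absurd hl (by linarith [hpos j])

end HamiltonMap

/-- Let `q` be a complex-valued quadratic form on `ℝ^{2n}` with
`Re q ≤ 0`, Hamilton map `F` and singular space `S`, elliptic on `S`. Let
`λ_1, …, λ_r` be the distinct positive real eigenvalues of `F` (so that
`σ(F) ∩ ℝ = {±λ_1, …, ±λ_r}`). Then `S = S_{λ_1} ⊕ … ⊕ S_{λ_r}` (every element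
of `S` decomposes, each `S_{λ_j} ⊆ S`, and the decomposition is unique), and the
summands are pairwise symplectically orthogonal. -/
theorem singularSpace_eq_direct_sum_Slam
    (n : ℕ) (hn : 1 ≤ n)
    (q : (Fin (n + n) → ℂ) → ℂ)
    (F : Matrix (Fin (n + n)) (Fin (n + n)) ℂ)
    (hq : ∀ X : Fin (n + n) → ℂ, q X = symp X (F.mulVec X))
    (hskew : ∀ X Y : Fin (n + n) → ℂ, symp (F.mulVec X) Y = -symp X (F.mulVec Y))
    (hre : ∀ X : Fin (n + n) → ℝ, (q (cx X)).re ≤ 0)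
    (hell : ∀ X ∈ singularSpace F, q (cx X) = 0 → X = 0)
    (r : ℕ) (lam : Fin r → ℝ)
    (hinj : Function.Injective lam)
    (hpos : ∀ j, 0 < lam j)
    (heig : ∀ j, ∃ v : Fin (n + n) → ℂ, v ≠ 0 ∧ F.mulVec v = (lam j : ℂ) • v)
    (hall : ∀ m : ℝ, (∃ v : Fin (n + n) → ℂ, v ≠ 0 ∧ F.mulVec v = (m : ℂ) • v) →
      ∃ j, m = lam j ∨ m = -lam j) :
    (∀ X ∈ singularSpace F, ∃ c : Fin r → (Fin (n + n) → ℝ),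
        (∀ j, c j ∈ Slam F (lam j)) ∧ X = ∑ j, c j) ∧
    (∀ j, Slam F (lam j) ⊆ singularSpace F) ∧
    (∀ c : Fin r → (Fin (n + n) → ℝ), (∀ j, c j ∈ Slam F (lam j)) →
        ∑ j, c j = 0 → ∀ j, c j = 0) ∧
    (∀ j k, j ≠ k → ∀ X ∈ Slam F (lam j), ∀ Y ∈ Slam F (lam k), symp X Y = 0) := by
  have hneg : ∀ X : Fin (n + n) → ℝ, symp X (ReM F *ᵥ X) ≤ 0 := fun X => by
    simpa [hq, symp_cx_mulVec_cx] using hre X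
  have hmem (j : Fin r) {X : Fin (n + n) → ℝ} :
      X ∈ Slam F (lam j) ↔ X ∈ singularEigenspace (ReM F).toLin' (ImM F).toLin' (lam j) :=
    mem_Slam_iff hskew hneg (hpos j).ne'
  simp only [hmem, Set.subset_def, mem_singularSpace_iff]
  refine ⟨fun X hX => ?_, fun j X hX => hX.1, fun c hc hsum j => ?_, fun j k hjk X hX Y hY => ?_⟩
  · rw [← iSup_singularEigenspace_eigenvalues_eq_singularSubmodule hskew
      (by simpa only [hq] using hell) hpos hall, mem_iSup_iff_exists_finsupp] at hX
    obtain ⟨c, hc, rfl⟩ := hX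
    exact ⟨c, hc, Finsupp.sum_fintype _ _ fun _ => rfl⟩
  · exact (iSupIndep_iff_finsetSum_eq_zero_imp_eq_zero _).1 (iSupIndep_singularEigenspace hinj hpos)
      Finset.univ c (fun i _ => hc i) hsum j (Finset.mem_univ j)
  · exact apply_eq_zero_of_mem_singularEigenspace (isSkewAdjoint_ReM_and_ImM hskew).2
      (hpos j) (hpos k) (hinj.ne hjk) hX hY
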